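/- Let p, q : F₂ → ℤ each be a finite ℤ-linear combination of indicator functions of sets belonging to 𝒩 ∪ 𝓜. Then (p + q) − (a·p + b·q) is finitely supported if and only if there exist integers n, m, k, l ∈ ℤ such that p − (n·1 + m·1_R) and q − (k·1 + l·1_{R'}) are finitely supported, where R = B(b) ∪ (⋃_{k≥1} B(a^k*b)) ∪ (B(a⁻¹) \ ⋃_{k≥1} B(a^{−k}*b⁻¹)) and R' = B(a) ∪ (⋃_{k≥1} B(b^k*a)) ∪ (B(b⁻¹) \ ⋃_{k≥1} B(b^{−k}*a⁻¹)). -/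

import Mathlib

open scoped Pointwise

/-- The free group on two generators. -/
abbrev F₂ := FreeGroup Bool

/-- The generator `a`. -/
def ga : F₂ := FreeGroup.of true

/-- The generator `b`. -/
def gb : F₂ := FreeGroup.of false

/-- The word length `|w|` of an element of the free group. -/
def wl (w : F₂) : ℕ := w.toWord.length

/-- The cylinder set `B(t)` of elements whose reduced word begins with the reduced word of `t`. -/
def cyl (t : F₂) : Set F₂ := {x | ∃ y : F₂, x = t * y ∧ wl x = wl t + wl y}
/-- The translate `g·f` of a function, `(g·f)(x) = f(g⁻¹x)`. -/
def tr (g : F₂) (f : F₂ → ℤ) : F₂ → ℤ := fun x => f (g⁻¹ * x)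

/-- The integer-valued indicator function of a set. -/
noncomputable def ind (S : Set F₂) : F₂ → ℤ := S.indicator 1

/-- A function is finitely supported if it vanishes outside a finite set. -/
def FinSupp (f : F₂ → ℤ) : Prop := (Function.support f).Finite

/-- `altProd c d [k₁, …, k_M] = c^{k₁} * d^{k₂} * c^{k₃} * ⋯` (alternating powers,
starting with `c`). -/
def altProd : F₂ → F₂ → List ℕ → F₂
  | _, _, [] => 1
  | c, d, k :: ks => c ^ k * altProd d c ks

/-- The family `𝒩_c` (for the ordered pair of letters `(c, d)`): all sets
`⋃_{k₁,…,k_M ≥ 1} B(y c^{k₁} d^{k₂} ⋯ z)` with `M ≥ 1`, `z = d` if `M` is odd and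
`z = c` if `M` is even, and `y` an element whose reduced word does not end in `c⁻¹`. -/
def Ncd (c d : F₂) : Set (Set F₂) :=
  {S | ∃ (y : F₂) (M : ℕ), 1 ≤ M ∧ wl (y * c) = wl y + 1 ∧
    S = ⋃ ks ∈ {l : List ℕ | l.length = M ∧ ∀ k ∈ l, 1 ≤ k},
          cyl (y * altProd c d ks * (if M % 2 = 1 then d else c))}

/-- `𝒩`, the family of cylinder sets `B(t)`, `t ≠ e`. -/
def Nfam : Set (Set F₂) := {S | ∃ t : F₂, t ≠ 1 ∧ S = cyl t}

/-- `𝓜 = 𝒩_a ∪ 𝒩_b ∪ 𝒩_{a⁻¹} ∪ 𝒩_{b⁻¹}`. -/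
def Mfam : Set (Set F₂) := Ncd ga gb ∪ Ncd gb ga ∪ Ncd ga⁻¹ gb⁻¹ ∪ Ncd gb⁻¹ ga⁻¹

/-- The set `R = B(b) ∪ (⋃_{k≥1} B(aᵏb)) ∪ (B(a⁻¹) \ ⋃_{k≥1} B(a⁻ᵏb⁻¹))`. -/
def Rset : Set F₂ :=
  cyl gb ∪ (⋃ k ∈ {k : ℕ | 1 ≤ k}, cyl (ga ^ k * gb)) ∪
    (cyl ga⁻¹ \ ⋃ k ∈ {k : ℕ | 1 ≤ k}, cyl (ga⁻¹ ^ k * gb⁻¹))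

/-- The set `R' = B(a) ∪ (⋃_{k≥1} B(bᵏa)) ∪ (B(b⁻¹) \ ⋃_{k≥1} B(b⁻ᵏa⁻¹))`. -/
def Rset' : Set F₂ :=
  cyl ga ∪ (⋃ k ∈ {k : ℕ | 1 ≤ k}, cyl (gb ^ k * ga)) ∪
    (cyl gb⁻¹ \ ⋃ k ∈ {k : ℕ | 1 ≤ k}, cyl (gb⁻¹ ^ k * ga⁻¹))

/-!
The functions `p` and `q` attach integers to the edges of the left Cayley graph of the free group,
and `(p + q) - (a·p + b·q)` is the divergence of the resulting edge flow. On the span of `𝒩 ∪ 𝓜`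
this flow is tame: far from the identity it does not see the lengths of runs of equal letters, nor
anything after a change of both generator and sign, nor anything after boundedly many runs.
If moreover it is conserved far from the identity, then downward induction on the number of runs
shows that on all long words `cᵏ d ⋯` it depends only on the letters `c` and `d`, and that it
changes sign when `c` is inverted. Hence, far out, `p` depends only on the sign of the first letter
other than `a`, `a⁻¹`, which makes it a combination of `1` and `1_R`; likewise for `q`.
-/

open FreeGroup Filter

section Words

variable {α ι : Type*} [DecidableEq α]

/-- The number of positions at which two consecutive letters of a word differ, that is, the number
of maximal constant runs minus one. -/
def changes : List α → ℕ
  | s :: t :: l => (if s = t then 0 else 1) + changes (t :: l)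
  | _ => 0

theorem changes_cons_self (s : α) (l : List α) : changes (s :: s :: l) = changes (s :: l) := by
  simp [changes]

theorem changes_cons_of_ne {s t : α} (h : s ≠ t) (l : List α) :
    changes (s :: t :: l) = changes (t :: l) + 1 := by
  simp [changes, h, Nat.add_comm]

theorem changes_cons_le (s : α) : ∀ l : List α, changes (s :: l) ≤ changes l + 1
  | [] => by simp [changes]
  | t :: l => by rw [changes]; split <;> omega

theorem changes_replicate_succ_append (c : α) (k : ℕ) (l : List α) :
    changes (List.replicate (k + 1) c ++ l) = changes (c :: l) := by
  induction k with
  | zero => rfl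
  | succ k ih => exact (changes_cons_self c _).trans ih

theorem changes_le_add_changes_drop (n : ℕ) (l : List α) : changes l ≤ n + changes (l.drop n) := by
  induction n generalizing l with
  | zero => simp
  | succ n ih =>
    cases l with
    | nil => simp [changes]
    | cons s l => have := changes_cons_le s l; have := ih l; simp only [List.drop_succ_cons]; omega

theorem changes_le_length (l : List α) : changes l ≤ l.length := by
  simpa [changes] using changes_le_add_changes_drop l.length l

theorem exists_eq_replicate_append_of_one_le_changes {l : List α} (h : 1 ≤ changes l) :
    ∃ c k d z, l = List.replicate (k + 1) c ++ d :: z ∧ c ≠ d := by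
  induction l with
  | nil => simp [changes] at h
  | cons s l ih =>
    cases l with
    | nil => simp [changes] at h
    | cons t l =>
      rcases eq_or_ne s t with rfl | hst
      · obtain ⟨c, k, d, z, hl, hcd⟩ := ih (by rwa [changes_cons_self] at h)
        obtain rfl : s = c := by simpa [List.replicate_succ] using congrArg List.head? hl
        exact ⟨s, k + 1, d, z, by rw [hl]; rfl, hcd⟩
      · exact ⟨s, 0, t, l, rfl, hst⟩

theorem isReduced_cons_self {c : ι × Bool} {l : List (ι × Bool)} :
    IsReduced (c :: c :: l) ↔ IsReduced (c :: l) := by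
  simp [isReduced_cons_cons]

theorem isReduced_cons_of_fst_ne {c d : ι × Bool} (h : c.1 ≠ d.1) {l : List (ι × Bool)} :
    IsReduced (c :: d :: l) ↔ IsReduced (d :: l) := by
  simp [isReduced_cons_cons, h]

theorem isReduced_replicate (k : ℕ) (c : ι × Bool) : IsReduced (List.replicate k c) :=
  List.isChain_replicate_of_rel k fun _ => rfl

theorem isReduced_replicate_succ_append (c : ι × Bool) (k : ℕ) (l : List (ι × Bool)) :
    IsReduced (List.replicate (k + 1) c ++ l) ↔ IsReduced (c :: l) := by
  induction k with
  | zero => rfl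
  | succ k ih => exact isReduced_cons_self.trans ih

end Words

section Tame

variable {ι β : Type*} [DecidableEq ι] {K K' : ℕ}

/-- A function of words is `K`-tame if, beyond the first `K` letters, it does not see the lengths of
runs (`contract`), nor anything after a change of both generator and sign (`truncate`), and if it
only depends on the first `K` runs (`forget`). Tameness of a set of words is tameness of its
membership predicate, `β = Prop`. -/
structure IsTame (K : ℕ) (f : List (ι × Bool) → β) : Prop where
  contract : ∀ u c x, K ≤ u.length → f (u ++ c :: c :: x) = f (u ++ c :: x)
  truncate : ∀ u (c e : ι × Bool) x, K ≤ u.length → c.1 ≠ e.1 → c.2 ≠ e.2 →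
    f (u ++ c :: e :: x) = f (u ++ [c])
  forget : ∀ u x, K ≤ changes u → f (u ++ x) = f u

namespace IsTame

theorem mono {f : List (ι × Bool) → β} (hf : IsTame K f) (h : K ≤ K') : IsTame K' f where
  contract u c x hu := hf.contract u c x (h.trans hu)
  truncate u c e x hu := hf.truncate u c e x (h.trans hu)
  forget u x hu := hf.forget u x (h.trans hu)

theorem comp_pi {κ γ : Type*} {Q : κ → List (ι × Bool) → β} (hQ : ∀ i, IsTame K (Q i))
    (F : (κ → β) → γ) : IsTame K fun l => F fun i => Q i l where
  contract u c x hu := congrArg F (funext fun i => (hQ i).contract u c x hu)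
  truncate u c e x hu h₁ h₂ := congrArg F (funext fun i => (hQ i).truncate u c e x hu h₁ h₂)
  forget u x hu := congrArg F (funext fun i => (hQ i).forget u x hu)

theorem contract_replicate {f : List (ι × Bool) → β} (hf : IsTame K f) {u : List (ι × Bool)}
    (hu : K ≤ u.length) (c : ι × Bool) (k : ℕ) (x : List (ι × Bool)) :
    f (u ++ (List.replicate (k + 1) c ++ x)) = f (u ++ c :: x) := by
  induction k with
  | zero => rfl
  | succ k ih => exact (hf.contract u c _ hu).trans ih

theorem contract_long_replicate {f : List (ι × Bool) → β} (hf : IsTame K f) {k : ℕ} (hk : K ≤ k)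
    (c : ι × Bool) (x : List (ι × Bool)) :
    f (List.replicate (k + 2) c ++ x) = f (List.replicate (k + 1) c ++ x) := by
  simp only [List.replicate_add, List.append_assoc]
  exact hf.contract (List.replicate k c) c x (by simpa using hk)

theorem prefix_and_drop {Q : List (ι × Bool) → Prop} (hQ : IsTame K Q) (y : List (ι × Bool)) :
    IsTame (K + y.length) fun l => y <+: l ∧ Q (l.drop y.length) where
  contract u c x hu := by
    have hy : y.length ≤ u.length := by omega
    simp only [List.isPrefix_append_of_length hy, List.drop_append_of_le_length hy]
    rw [hQ.contract _ c x (by rw [List.length_drop]; omega)]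
  truncate u c e x hu h₁ h₂ := by
    have hy : y.length ≤ u.length := by omega
    simp only [List.isPrefix_append_of_length hy, List.drop_append_of_le_length hy]
    rw [hQ.truncate _ c e x (by rw [List.length_drop]; omega) h₁ h₂]
  forget u x hu := by
    have hy : y.length ≤ u.length := by have := changes_le_length u; omega
    have hdrop := changes_le_add_changes_drop y.length u
    simp only [List.isPrefix_append_of_length hy, List.drop_append_of_le_length hy]
    rw [hQ.forget _ x (by omega)]

end IsTame

end Tame

section Flow

variable {A : Type*} {K N r : ℕ} {φ : List (Bool × Bool) → A}

/-- `φ` is constant on the reduced words of length at least `N` which begin with `w`. -/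
def IsConstAfter (N : ℕ) (φ : List (Bool × Bool) → A) (w : List (Bool × Bool)) : Prop :=
  ∃ a, ∀ x, IsReduced (w ++ x) → N ≤ (w ++ x).length → φ (w ++ x) = a

theorem isConstAfter_side (ih : ∀ w, r < changes w → IsConstAfter N φ w) {s t : Bool × Bool}
    {l : List (Bool × Bool)} (hr : r ≤ changes (s :: l)) (ht : t.1 ≠ s.1) :
    IsConstAfter N φ (t :: s :: l) :=
  ih _ (by rw [changes_cons_of_ne (ne_of_apply_ne Prod.fst ht)]; omega)

variable [AddCommGroup A]

/-- Conservation law on the Cayley tree rooted at the identity: the value of `φ` at a reduced word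
`s :: l` of length at least `N`, read as the amount flowing into that vertex from the vertex `l`,
equals the total amount flowing out to its three successors `t :: s :: l`. -/
def IsFlow (N : ℕ) (φ : List (Bool × Bool) → A) : Prop :=
  ∀ s l, IsReduced (s :: l) → N ≤ (s :: l).length →
    φ (s :: l) = φ (s :: s :: l) + φ ((!s.1, s.2) :: s :: l) + φ ((!s.1, !s.2) :: s :: l)

theorem IsConstAfter.of_cons_self (hN : IsFlow N φ) {s : Bool × Bool} {l : List (Bool × Bool)}
    (hside : ∀ t : Bool × Bool, t.1 ≠ s.1 → IsConstAfter N φ (t :: s :: l))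
    (h : IsConstAfter N φ (s :: s :: l)) : IsConstAfter N φ (s :: l) := by
  obtain ⟨a, ha⟩ := h
  obtain ⟨b, hb⟩ := hside (!s.1, s.2) (by simp)
  obtain ⟨b', hb'⟩ := hside (!s.1, !s.2) (by simp)
  refine ⟨a + b + b', fun x hx hlen => ?_⟩
  have hlen' : N ≤ (s :: l ++ x).length + 1 := by omega
  rw [← ha x (isReduced_cons_self.2 hx) hlen',
    ← hb x ((isReduced_cons_of_fst_ne (by simp)).2 hx) hlen',
    ← hb' x ((isReduced_cons_of_fst_ne (by simp)).2 hx) hlen']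
  exact hN s (l ++ x) hx hlen

theorem IsConstAfter.cons_self (hN : IsFlow N φ) {s : Bool × Bool} {l : List (Bool × Bool)}
    (hlen : N ≤ (s :: l).length)
    (hside : ∀ t : Bool × Bool, t.1 ≠ s.1 → IsConstAfter N φ (t :: s :: l))
    (h : IsConstAfter N φ (s :: l)) : IsConstAfter N φ (s :: s :: l) := by
  obtain ⟨a, ha⟩ := h
  obtain ⟨b, hb⟩ := hside (!s.1, s.2) (by simp)
  obtain ⟨b', hb'⟩ := hside (!s.1, !s.2) (by simp)
  refine ⟨a - b - b', fun x hx hlen' => ?_⟩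
  replace hx := isReduced_cons_self.1 hx
  rw [← ha x hx (by grind), ← hb x ((isReduced_cons_of_fst_ne (by simp)).2 hx) hlen',
    ← hb' x ((isReduced_cons_of_fst_ne (by simp)).2 hx) hlen']
  have hflow := hN s (l ++ x) hx (by grind)
  simp only [List.cons_append]
  rw [hflow]
  abel

theorem IsConstAfter.of_replicate (hN : IsFlow N φ) (ih : ∀ w, r < changes w → IsConstAfter N φ w)
    {c : Bool × Bool} {l : List (Bool × Bool)} (hr : r ≤ changes (c :: l)) {k i : ℕ}
    (h : IsConstAfter N φ (List.replicate (k + i + 1) c ++ l)) :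
    IsConstAfter N φ (List.replicate (k + 1) c ++ l) := by
  induction i with
  | zero => exact h
  | succ i ihi =>
    refine ihi (.of_cons_self hN (fun t ht => isConstAfter_side ih ?_ ht) h)
    exact hr.trans_eq (changes_replicate_succ_append c (k + i) l).symm

theorem IsConstAfter.replicate (hN : IsFlow N φ) (ih : ∀ w, r < changes w → IsConstAfter N φ w)
    {c : Bool × Bool} {l : List (Bool × Bool)} (hr : r ≤ changes (c :: l)) (hlen : N ≤ l.length)
    (h : IsConstAfter N φ (c :: l)) (i : ℕ) :
    IsConstAfter N φ (List.replicate (i + 1) c ++ l) := by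
  induction i with
  | zero => exact h
  | succ i ihi =>
    refine ihi.cons_self hN (by simp; omega) fun t ht => isConstAfter_side ih ?_ ht
    exact hr.trans_eq (changes_replicate_succ_append c i l).symm

/- If `e` has the sign opposite to `d`, truncation makes `φ` constant after `eᵏ⁺¹ d`. For the
inverse of that letter, conservation at the run of `d` shows that the two side flows cancel, since
`φ` does not see a further `d`. -/
theorem isConstAfter_side_of_long_run (hφ : IsTame K φ) (hN : IsFlow N φ)
    (ih : ∀ w, r < changes w → IsConstAfter N φ w) {d e : Bool × Bool} {l : List (Bool × Bool)}
    (hr : r ≤ changes (d :: l) + 1) (he : e.1 ≠ d.1) :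
    IsConstAfter N φ (e :: (List.replicate (K + N + 1) d ++ l)) := by
  set u := List.replicate (K + N) d ++ l with hu
  change IsConstAfter N φ (e :: d :: u)
  have hopp : IsConstAfter N φ ((!d.1, !d.2) :: d :: u) := by
    have hr' : r ≤ changes ((!d.1, !d.2) :: d :: u) := by
      rw [changes_cons_of_ne (by simp [Prod.ext_iff])]
      exact hr.trans_eq (congrArg (· + 1) (changes_replicate_succ_append d (K + N) l).symm)
    refine IsConstAfter.of_replicate hN ih (k := 0) (i := K) hr'
      ⟨φ (List.replicate K (!d.1, !d.2) ++ [(!d.1, !d.2)]), fun x _ _ => ?_⟩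
    simpa [List.replicate_succ'] using hφ.truncate (List.replicate K (!d.1, !d.2)) (!d.1, !d.2) d
      (u ++ x) (by simp) (by simp) (by simp)
  have hsame : IsConstAfter N φ ((!d.1, d.2) :: d :: u) := by
    obtain ⟨a, ha⟩ := hopp
    refine ⟨-a, fun x hx hlen => ?_⟩
    replace hx : IsReduced (d :: (u ++ x)) := (isReduced_cons_of_fst_ne (by simp)).1 hx
    have hcontract : φ (d :: d :: (u ++ x)) = φ (d :: (u ++ x)) := by
      simpa [u, List.replicate_succ] using
        hφ.contract_long_replicate (Nat.le_add_right K N) d (l ++ x)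
    have hflow := hN d (u ++ x) hx (by simp [u]; omega)
    have := ha x ((isReduced_cons_of_fst_ne (by simp)).2 hx) hlen
    simp only [List.cons_append] at this ⊢
    grind
  obtain rfl | rfl : e = (!d.1, d.2) ∨ e = (!d.1, !d.2) := by
    rcases d with ⟨_ | _, _ | _⟩ <;> rcases e with ⟨_ | _, _ | _⟩ <;> simp_all
  · exact hsame
  · exact hopp

theorem IsFlow.isConstAfter (hφ : IsTame K φ) (hN : IsFlow N φ) {w : List (Bool × Bool)}
    (hw : 1 ≤ changes w) : IsConstAfter N φ w := by
  obtain ⟨n, hn⟩ : ∃ n, K ≤ changes w + n := ⟨K, by omega⟩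
  induction n generalizing w with
  | zero => exact ⟨φ w, fun x _ _ => hφ.forget w x hn⟩
  | succ n ih =>
    by_cases hred : IsReduced w
    swap
    · exact ⟨0, fun x hx _ => absurd (hx.infix (List.prefix_append w x).isInfix) hred⟩
    replace ih : ∀ w', changes w < changes w' → IsConstAfter N φ w' := fun w' hw' =>
      ih (by omega) (by omega)
    obtain ⟨c, j, d, z, rfl, hcd⟩ : ∃ c j d z, w = List.replicate (j + 1) c ++ d :: z ∧ c ≠ d :=
      exists_eq_replicate_append_of_one_le_changes hw
    rw [changes_replicate_succ_append, changes_cons_of_ne hcd] at ih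
    rw [isReduced_replicate_succ_append, isReduced_cons_cons] at hred
    have hcd' : c.1 ≠ d.1 := fun h => hcd (Prod.ext h (hred.1 h))
    have hlong : changes (d :: z) = changes (List.replicate (K + N + 1) d ++ z) :=
      (changes_replicate_succ_append d (K + N) z).symm
    have hr : changes (d :: z) + 1 ≤ changes (c :: (List.replicate (K + N + 1) d ++ z)) := by
      rw [hlong]
      exact (changes_cons_of_ne hcd _).ge
    have hside := isConstAfter_side_of_long_run hφ hN ih le_rfl hcd'
    obtain ⟨a, ha⟩ := hside.replicate hN ih hr (by simp; omega) (j + K)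
    refine IsConstAfter.of_replicate hN ih (i := K) (changes_cons_of_ne hcd z).ge
      ⟨a, fun x hx _ => ?_⟩
    have hpump : φ (List.replicate (j + K + 1) c ++ d :: z ++ x) =
        φ (List.replicate (j + K + 1) c ++ (List.replicate (K + N + 1) d ++ z) ++ x) := by
      simpa only [List.append_assoc, List.cons_append] using
        (hφ.contract_replicate (by simp; omega) d (K + N) (z ++ x)).symm
    rw [hpump]
    refine ha x ?_ (by simp; omega)
    simp only [List.append_assoc, isReduced_replicate_succ_append] at hx ⊢
    rw [List.cons_append, isReduced_cons_of_fst_ne hcd'] at hx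
    rwa [List.replicate_succ, List.cons_append, isReduced_cons_of_fst_ne hcd', ← List.cons_append,
      ← List.replicate_succ, isReduced_replicate_succ_append]

/-- The value of `φ` at a word which turns into the letter `c` after a long run of the letter `d`,
that is, the flow around the corner `(c, d)` of the Cayley tree. -/
def cornerValue (M : ℕ) (φ : List (Bool × Bool) → A) (c d : Bool × Bool) : A :=
  φ (c :: List.replicate (M + 1) d)

theorem IsFlow.apply_cons_cons (hφ : IsTame K φ) (hN : IsFlow N φ) {c d : Bool × Bool}
    (hcd : c.1 ≠ d.1) {x : List (Bool × Bool)} (hx : IsReduced (d :: x))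
    (hlen : N ≤ (c :: d :: x).length) : φ (c :: d :: x) = cornerValue (K + N) φ c d := by
  obtain ⟨a, ha⟩ := hN.isConstAfter hφ (w := [c, d])
    (changes_cons_of_ne (ne_of_apply_ne Prod.fst hcd) []).ge
  have hlong : IsReduced (d :: List.replicate (K + N) d) := isReduced_replicate (K + N + 1) d
  calc φ (c :: d :: x) = a := ha x ((isReduced_cons_of_fst_ne hcd).2 hx) hlen
    _ = φ (c :: d :: List.replicate (K + N) d) :=
      (ha _ ((isReduced_cons_of_fst_ne hcd).2 hlong) (by simp; omega)).symm

theorem IsFlow.cornerValue_inv (hφ : IsTame K φ) (hN : IsFlow N φ) {c d : Bool × Bool}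
    (hcd : c.1 ≠ d.1) :
    cornerValue (K + N) φ (c.1, !c.2) d = -cornerValue (K + N) φ c d := by
  have hlong : IsReduced (d :: List.replicate (K + N) d) := isReduced_replicate (K + N + 1) d
  have hflow := hN d (List.replicate (K + N) d) hlong (by simp; omega)
  have hcontract : φ (d :: d :: List.replicate (K + N) d) = φ (d :: List.replicate (K + N) d) := by
    simpa [List.replicate_succ] using hφ.contract_long_replicate (Nat.le_add_right K N) d []
  rw [hcontract, add_assoc, left_eq_add] at hflow
  simp only [cornerValue, List.replicate_succ, eq_neg_iff_add_eq_zero]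
  rcases c with ⟨_ | _, _ | _⟩ <;> rcases d with ⟨_ | _, _ | _⟩ <;>
    simp_all [add_comm]

theorem IsFlow.apply_cons_self (hφ : IsTame K φ) (hN : IsFlow N φ) {c : Bool × Bool}
    {x : List (Bool × Bool)} (hx : IsReduced (c :: x)) (hlen : N ≤ (c :: x).length) :
    φ (c :: c :: x) = φ (c :: x) := by
  have hside : ∀ b : Bool, φ ((!c.1, b) :: c :: x) = cornerValue (K + N) φ (!c.1, b) c :=
    fun b => hN.apply_cons_cons hφ (by simp) hx (by grind)
  have hinv := hN.cornerValue_inv hφ (c := (!c.1, c.2)) (d := c) (by simp)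
  rw [hN c x hx hlen, hside, hside, hinv, add_neg_cancel_right]

theorem IsFlow.apply_replicate_append_cons (hφ : IsTame K φ) (hN : IsFlow N φ) {c d : Bool × Bool}
    (hcd : c.1 ≠ d.1) (k : ℕ) {x : List (Bool × Bool)} (hx : IsReduced (d :: x))
    (hlen : N ≤ (List.replicate (k + 1) c ++ d :: x).length) :
    φ (List.replicate (k + 1) c ++ d :: x) = cornerValue (K + N) φ c d := by
  have hred : ∀ k {y}, IsReduced (d :: y) → IsReduced (List.replicate (k + 1) c ++ d :: y) :=
    fun k y hy => (isReduced_replicate_succ_append c k _).2 ((isReduced_cons_of_fst_ne hcd).2 hy)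
  have hlong : IsReduced (d :: List.replicate (K + N) d) := isReduced_replicate (K + N + 1) d
  have hcollapse : φ (List.replicate (k + 1) c ++ d :: List.replicate (K + N) d) =
      cornerValue (K + N) φ c d := by
    clear hlen
    induction k with
    | zero => rfl
    | succ k ih => exact (hN.apply_cons_self hφ (hred k hlong) (by simp; omega)).trans ih
  obtain ⟨a, ha⟩ := hN.isConstAfter hφ (w := List.replicate (k + 1) c ++ [d]) <| by
    rw [changes_replicate_succ_append]
    exact (changes_cons_of_ne (ne_of_apply_ne Prod.fst hcd) []).ge
  simp only [List.append_assoc, List.singleton_append] at ha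
  rw [← hcollapse, ha x (hred k hx) hlen, ha _ (hred k hlong) (by simp; omega)]

end Flow

section EdgeFlow

variable {A : Type*} [AddCommGroup A] {K N : ℕ} {f : Bool → List (Bool × Bool) → A}

/-- The flow attached to functions `f g` on reduced words, where `f g x` is read as the amount
flowing through the edge of the left Cayley graph from `x` to `g * x`: its value at `s :: l` is the
amount flowing from `l` to `s :: l`. -/
def edgeFlow (f : Bool → List (Bool × Bool) → A) : List (Bool × Bool) → A
  | [] => 0
  | (g, true) :: l => f g l
  | (g, false) :: l => -f g ((g, false) :: l)

theorem IsTame.edgeFlow (hf : ∀ g, IsTame K (f g)) : IsTame (K + 1) (edgeFlow f) where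
  contract u c x hu := by
    rcases u with _ | ⟨⟨g, _ | _⟩, u⟩
    · simp at hu
    · exact congrArg Neg.neg ((hf g).contract ((g, false) :: u) c x (by omega))
    · exact (hf g).contract u c x (Nat.le_of_succ_le_succ hu)
  truncate u c e x hu h₁ h₂ := by
    rcases u with _ | ⟨⟨g, _ | _⟩, u⟩
    · simp at hu
    · exact congrArg Neg.neg ((hf g).truncate ((g, false) :: u) c e x (by omega) h₁ h₂)
    · exact (hf g).truncate u c e x (Nat.le_of_succ_le_succ hu) h₁ h₂
  forget u x hu := by
    rcases u with _ | ⟨⟨g, _ | _⟩, u⟩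
    · simp [changes] at hu
    · exact congrArg Neg.neg ((hf g).forget ((g, false) :: u) x (by omega))
    · exact (hf g).forget u x (by have := changes_cons_le (g, true) u; omega)

theorem toWord_inv_of_mul_mk {ι : Type*} [DecidableEq ι] {g : ι} {l : List (ι × Bool)}
    (h : IsReduced ((g, false) :: l)) : ((of g)⁻¹ * mk l).toWord = (g, false) :: l :=
  h.reduce_eq

theorem toWord_inv_of_mul_mk_cons {ι : Type*} [DecidableEq ι] {g : ι} {l : List (ι × Bool)}
    (h : IsReduced l) : ((of g)⁻¹ * mk ((g, true) :: l)).toWord = l :=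
  (congrArg toWord (inv_mul_cancel_left (of g) (mk l))).trans h.reduce_eq

theorem sub_apply_inv_of_mul_of_eq {s : Bool × Bool} {l : List (Bool × Bool)}
    (h : IsReduced (s :: l)) :
    f s.1 (s :: l) - f s.1 ((of s.1)⁻¹ * mk (s :: l)).toWord =
      edgeFlow f (s :: s :: l) - edgeFlow f (s :: l) := by
  obtain ⟨g, _ | _⟩ := s
  · rw [toWord_inv_of_mul_mk (isReduced_cons_self.2 h)]
    simp only [edgeFlow]
    abel
  · rw [toWord_inv_of_mul_mk_cons (h.infix (List.suffix_cons _ l).isInfix)]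
    rfl

theorem sub_apply_inv_of_mul_of_ne {s : Bool × Bool} {l : List (Bool × Bool)}
    (h : IsReduced (s :: l)) {g : Bool} (hg : g ≠ s.1) :
    f g (s :: l) - f g ((of g)⁻¹ * mk (s :: l)).toWord =
      edgeFlow f ((g, true) :: s :: l) + edgeFlow f ((g, false) :: s :: l) := by
  rw [toWord_inv_of_mul_mk ((isReduced_cons_of_fst_ne hg).2 h)]
  exact sub_eq_add_neg _ _

theorem isFlow_edgeFlow (h : ∀ l, IsReduced l → N ≤ l.length →
    ∑ g, (f g l - f g ((of g)⁻¹ * mk l).toWord) = 0) : IsFlow N (edgeFlow f) := by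
  intro s l hred hlen
  have hsum := h (s :: l) hred hlen
  have hne : (!s.1) ≠ s.1 := by simp
  have huniv : (Finset.univ : Finset Bool) = {s.1, !s.1} := by
    cases s.1 <;> decide
  rw [huniv, Finset.sum_pair hne.symm, sub_apply_inv_of_mul_of_eq hred,
    sub_apply_inv_of_mul_of_ne hred hne] at hsum
  cases s.2 <;> grind

theorem apply_replicate_append_cons_of_isFlow_edgeFlow (hφ : IsTame K (edgeFlow f))
    (hN : IsFlow N (edgeFlow f)) {g : Bool} {d : Bool × Bool} (hd : g ≠ d.1) (b : Bool) (k : ℕ)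
    {x : List (Bool × Bool)} (hx : IsReduced (d :: x))
    (hlen : N ≤ (List.replicate k (g, b) ++ d :: x).length) :
    f g (List.replicate k (g, b) ++ d :: x) = cornerValue (K + N) (edgeFlow f) (g, true) d := by
  cases b with
  | true => exact hN.apply_replicate_append_cons hφ (c := (g, true)) hd k hx (by grind)
  | false =>
    cases k with
    | zero => exact hN.apply_cons_cons hφ (c := (g, true)) hd hx (by grind)
    | succ k =>
      have hcorner := hN.apply_replicate_append_cons hφ (c := (g, false)) hd k hx hlen
      rw [← neg_eq_iff_eq_neg.2 (hN.cornerValue_inv hφ (c := (g, true)) hd), Bool.not_true,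
        ← hcorner]
      exact (neg_neg _).symm

end EdgeFlow

section AlternatingWords

variable {α ι : Type*}

/-- `altWord c d [k₁, …, k_M]` is the word `c^{k₁} d^{k₂} c^{k₃} ⋯ z`, where the final letter `z` is
the one of `c`, `d` which is next in turn. -/
def altWord (c d : α) : List ℕ → List α
  | [] => [c]
  | k :: ks => List.replicate k c ++ altWord d c ks

/-- The words beginning with `altWord c d ks` for some list `ks` of `M` positive exponents. This
recursive form, equivalent by `startsAlternating_iff`, is the one suited to tameness. -/
def StartsAlternating : ℕ → α → α → List α → Prop
  | 0, c, _, l => l.head? = some c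
  | _ + 1, _, _, [] => False
  | M + 1, c, d, s :: l => s = c ∧ (StartsAlternating (M + 1) c d l ∨ StartsAlternating M d c l)

theorem not_startsAlternating_nil (M : ℕ) (c d : α) : ¬ StartsAlternating M c d [] := by
  cases M <;> simp [StartsAlternating]

theorem StartsAlternating.eq_of_cons {M : ℕ} {c d s : α} {l : List α}
    (h : StartsAlternating M c d (s :: l)) : s = c := by
  cases M with
  | zero => simpa [StartsAlternating] using h
  | succ M => exact h.1

theorem startsAlternating_contract {c d : α} (hcd : c ≠ d) (M : ℕ) (u : List α) (s : α)
    (x : List α) :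
    StartsAlternating M c d (u ++ s :: s :: x) ↔ StartsAlternating M c d (u ++ s :: x) := by
  induction u generalizing M c d with
  | nil =>
    cases M with
    | zero => simp [StartsAlternating]
    | succ M =>
      refine ⟨fun h => h.2.resolve_right fun h' => ?_, fun h => ⟨h.eq_of_cons, .inl h⟩⟩
      exact hcd (h.eq_of_cons.symm.trans h'.eq_of_cons)
  | cons t u ih =>
    cases M with
    | zero => simp [StartsAlternating]
    | succ M => simp only [List.cons_append, StartsAlternating, ih hcd, ih hcd.symm]

theorem startsAlternating_truncate {c d : ι × Bool} (hcd : c.2 = d.2) (M : ℕ)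
    (u : List (ι × Bool)) {s e : ι × Bool} (h₁ : s.1 ≠ e.1) (h₂ : s.2 ≠ e.2)
    (x : List (ι × Bool)) :
    StartsAlternating M c d (u ++ s :: e :: x) ↔ StartsAlternating M c d (u ++ [s]) := by
  induction u generalizing M c d with
  | nil =>
    cases M with
    | zero => simp [StartsAlternating]
    | succ M =>
      refine and_congr_right fun hs => iff_of_false ?_ ?_
      · rintro (h | h)
        · exact h₁ (congrArg Prod.fst (hs.trans h.eq_of_cons.symm))
        · rw [hs, h.eq_of_cons] at h₂
          exact h₂ hcd
      · exact not_or.2 ⟨not_startsAlternating_nil _ _ _, not_startsAlternating_nil _ _ _⟩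
  | cons t u ih =>
    cases M with
    | zero => simp [StartsAlternating]
    | succ M => simp only [List.cons_append, StartsAlternating, ih hcd, ih hcd.symm]

theorem startsAlternating_forget [DecidableEq α] {c d : α} (hcd : c ≠ d) {M : ℕ} {u : List α}
    (hu : M + 1 ≤ changes u) (x : List α) :
    StartsAlternating M c d (u ++ x) ↔ StartsAlternating M c d u := by
  induction u generalizing M c d with
  | nil => simp [changes] at hu
  | cons s u ih =>
    cases M with
    | zero => simp [StartsAlternating]
    | succ M =>
      cases u with
      | nil => simp [changes] at hu
      | cons t u =>
        refine and_congr_right fun hs => ?_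
        by_cases hst : s = t
        · have hd : ∀ l, ¬ StartsAlternating M d c (t :: l) := fun l h =>
            hcd (hs.symm.trans (hst.trans h.eq_of_cons))
          rw [← hst, changes_cons_self, hst] at hu
          exact (or_iff_left (hd _)).trans ((ih hcd hu).trans (or_iff_left (hd _)).symm)
        · have hc : ∀ l, ¬ StartsAlternating (M + 1) c d (t :: l) := fun l h =>
            hst (hs.trans h.eq_of_cons.symm)
          rw [changes_cons_of_ne hst] at hu
          exact (or_iff_right (hc _)).trans
            ((ih hcd.symm (Nat.le_of_succ_le_succ hu)).trans (or_iff_right (hc _)).symm)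

theorem isTame_startsAlternating [DecidableEq ι] {c d : ι × Bool} (h₁ : c.1 ≠ d.1)
    (h₂ : c.2 = d.2) (M : ℕ) : IsTame (M + 1) (StartsAlternating M c d) where
  contract u s x _ := propext (startsAlternating_contract (ne_of_apply_ne Prod.fst h₁) M u s x)
  truncate u _ _ x _ hs₁ hs₂ := propext (startsAlternating_truncate h₂ M u hs₁ hs₂ x)
  forget _ x hu := propext (startsAlternating_forget (ne_of_apply_ne Prod.fst h₁) hu x)

theorem startsAlternating_succ_iff {M : ℕ} {c d : α} {l : List α} :
    StartsAlternating (M + 1) c d l ↔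
      ∃ k x, l = List.replicate (k + 1) c ++ x ∧ StartsAlternating M d c x := by
  induction l with
  | nil => simp [StartsAlternating]
  | cons s l ih =>
    rw [StartsAlternating, ih]
    constructor
    · rintro ⟨rfl, ⟨k, x, rfl, h⟩ | h⟩
      · exact ⟨k + 1, x, rfl, h⟩
      · exact ⟨0, l, rfl, h⟩
    · rintro ⟨_ | k, x, hl, h⟩ <;> obtain ⟨rfl, rfl⟩ := List.cons.inj hl
      · exact ⟨rfl, .inr h⟩
      · exact ⟨rfl, .inl ⟨k, x, rfl, h⟩⟩

theorem startsAlternating_iff {M : ℕ} {c d : α} {l : List α} :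
    StartsAlternating M c d l ↔
      ∃ ks : List ℕ, (ks.length = M ∧ ∀ k ∈ ks, 1 ≤ k) ∧ altWord c d ks <+: l := by
  induction M generalizing c d l with
  | zero => cases l <;> simp [StartsAlternating, altWord, List.length_eq_zero_iff, eq_comm]
  | succ M ih =>
    rw [startsAlternating_succ_iff]
    constructor
    · rintro ⟨k, x, rfl, h⟩
      obtain ⟨ks, ⟨hlen, hpos⟩, hks⟩ := ih.1 h
      exact ⟨(k + 1) :: ks, ⟨by simp [hlen], by simpa using hpos⟩,
        (List.prefix_append_right_inj _).2 hks⟩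
    · rintro ⟨_ | ⟨k, ks⟩, ⟨hlen, hpos⟩, x, rfl⟩
      · simp at hlen
      · obtain ⟨hk, hpos'⟩ := List.forall_mem_cons.1 hpos
        obtain ⟨j, rfl⟩ := Nat.exists_eq_add_of_le' hk
        exact ⟨j, altWord d c ks ++ x, List.append_assoc _ _ _,
          ih.2 ⟨ks, ⟨Nat.succ.inj hlen, hpos'⟩, List.prefix_append _ _⟩⟩

theorem exists_altWord_eq_cons {c d : ι × Bool} (hcd : c.1 ≠ d.1) {ks : List ℕ}
    (hks : ∀ k ∈ ks, 1 ≤ k) : ∃ x, altWord c d ks = c :: x ∧ IsReduced (c :: x) := by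
  induction ks generalizing c d with
  | nil => exact ⟨[], rfl, .singleton⟩
  | cons k ks ih =>
    obtain ⟨hk, hks'⟩ := List.forall_mem_cons.1 hks
    obtain ⟨j, rfl⟩ := Nat.exists_eq_add_of_le' hk
    obtain ⟨x, hx, hred⟩ := ih hcd.symm hks'
    refine ⟨List.replicate j c ++ d :: x, by rw [altWord, hx]; rfl, ?_⟩
    exact (isReduced_replicate_succ_append c j _).2 ((isReduced_cons_of_fst_ne hcd).2 hred)

end AlternatingWords

section Families

theorem toWord_mul_eq_append {ι : Type*} [DecidableEq ι] {x y : FreeGroup ι}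
    (h : (x * y).toWord.length = x.toWord.length + y.toWord.length) :
    (x * y).toWord = x.toWord ++ y.toWord :=
  (toWord_mul_sublist x y).eq_of_length (by rw [h, List.length_append])

theorem mem_cyl_iff {t x : F₂} : x ∈ cyl t ↔ t.toWord <+: x.toWord := by
  constructor
  · rintro ⟨y, rfl, h⟩
    exact ⟨y.toWord, (toWord_mul_eq_append h).symm⟩
  · rintro ⟨l, hl⟩
    have hred : IsReduced l :=
      (hl ▸ isReduced_toWord (x := x)).infix (List.suffix_append _ _).isInfix
    have hx : x = t * mk l := by
      rw [← mk_toWord (x := x), ← hl, ← mul_mk, mk_toWord]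
    refine ⟨mk l, hx, ?_⟩
    rw [wl, wl, wl, ← hl, toWord_mk, hred.reduce_eq, List.length_append]

theorem mk_singleton_pow {ι : Type*} (c : ι × Bool) (k : ℕ) :
    mk [c] ^ k = mk (List.replicate k c) := by
  rw [pow_mk, List.flatten_replicate_singleton]

theorem altProd_mul_eq_mk_altWord (c d : Bool × Bool) (ks : List ℕ) :
    altProd (mk [c]) (mk [d]) ks * (if ks.length % 2 = 1 then mk [d] else mk [c]) =
      mk (altWord c d ks) := by
  induction ks generalizing c d with
  | nil => rfl
  | cons k ks ih =>
    have hparity : (ks.length + 1) % 2 = 1 ↔ ¬ ks.length % 2 = 1 := by omega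
    rw [altWord, ← mul_mk, ← ih d c, ← mk_singleton_pow, altProd, List.length_cons, mul_assoc]
    simp only [hparity, ite_not]

theorem toWord_mul_altProd_mul {c d : Bool × Bool} (hcd : c.1 ≠ d.1) {y : F₂}
    (hy : wl (y * mk [c]) = wl y + 1) {ks : List ℕ} (hks : ∀ k ∈ ks, 1 ≤ k) :
    (y * altProd (mk [c]) (mk [d]) ks * (if ks.length % 2 = 1 then mk [d] else mk [c])).toWord =
      y.toWord ++ altWord c d ks := by
  obtain ⟨x, hx, hred⟩ := exists_altWord_eq_cons hcd hks
  have hyc : IsReduced (y.toWord ++ [c]) :=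
    toWord_mul_eq_append (y := mk [c]) hy ▸ isReduced_toWord
  have hycx : IsReduced (y.toWord ++ [c] ++ x) := hyc.append_overlap hred (by simp)
  rw [mul_assoc, altProd_mul_eq_mk_altWord, hx, ← mk_toWord (x := y), mul_mk, toWord_mk, mk_toWord,
    List.append_cons, hycx.reduce_eq]

theorem exists_isTame_of_mem_Ncd {c d : Bool × Bool} (h₁ : c.1 ≠ d.1) (h₂ : c.2 = d.2)
    {S : Set F₂} (hS : S ∈ Ncd (mk [c]) (mk [d])) :
    ∃ K Q, IsTame K Q ∧ ∀ x, x ∈ S ↔ Q x.toWord := by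
  obtain ⟨y, M, -, hy, rfl⟩ := hS
  refine ⟨_, _, (isTame_startsAlternating h₁ h₂ M).prefix_and_drop y.toWord, fun x => ?_⟩
  simp only [Set.mem_iUnion, Set.mem_ofPred_eq, exists_prop, mem_cyl_iff, startsAlternating_iff]
  constructor
  · rintro ⟨ks, ⟨rfl, hks⟩, hx⟩
    rw [toWord_mul_altProd_mul h₁ hy hks] at hx
    obtain ⟨z, hz⟩ := hx
    rw [← hz, List.append_assoc, List.drop_left]
    exact ⟨List.prefix_append _ _, ks, ⟨rfl, hks⟩, List.prefix_append _ _⟩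
  · rintro ⟨⟨z, hz⟩, ks, ⟨rfl, hks⟩, hx⟩
    rw [← hz, List.drop_left] at hx
    refine ⟨ks, ⟨rfl, hks⟩, ?_⟩
    rw [toWord_mul_altProd_mul h₁ hy hks, ← hz]
    exact (List.prefix_append_right_inj _).2 hx

theorem exists_isTame_of_mem {S : Set F₂} (hS : S ∈ Nfam ∪ Mfam) :
    ∃ K Q, IsTame K Q ∧ ∀ x, x ∈ S ↔ Q x.toWord := by
  rcases hS with ⟨t, -, rfl⟩ | ((hS | hS) | hS) | hS
  · have htrue : IsTame 0 fun _ : List (Bool × Bool) => True :=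
      ⟨fun _ _ _ _ => rfl, fun _ _ _ _ _ _ _ => rfl, fun _ _ _ => rfl⟩
    exact ⟨_, _, htrue.prefix_and_drop t.toWord, fun x => by simp only [mem_cyl_iff, and_true]⟩
  · exact exists_isTame_of_mem_Ncd (c := (true, true)) (d := (false, true)) (by simp) rfl hS
  · exact exists_isTame_of_mem_Ncd (c := (false, true)) (d := (true, true)) (by simp) rfl hS
  · exact exists_isTame_of_mem_Ncd (c := (true, false)) (d := (false, false)) (by simp) rfl hS
  · exact exists_isTame_of_mem_Ncd (c := (false, false)) (d := (true, false)) (by simp) rfl hS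

theorem exists_isTame_of_linearCombination {ι : Type*} [Fintype ι] {S : ι → Set F₂}
    (hS : ∀ i, S i ∈ Nfam ∪ Mfam) (c : ι → ℤ) :
    ∃ K f, IsTame K f ∧ ∑ i, c i • ind (S i) = fun x => f x.toWord := by
  classical
  choose K Q hQ hmem using fun i => exists_isTame_of_mem (hS i)
  have hK : ∀ i, IsTame (Finset.univ.sup K) (Q i) := fun i =>
    (hQ i).mono (Finset.le_sup (Finset.mem_univ i))
  refine ⟨_, _, IsTame.comp_pi hK fun P => ∑ i, c i • if P i then (1 : ℤ) else 0,
    funext fun x => ?_⟩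
  simp [ind, Set.indicator_apply, hmem]

end Families

section SignSet

/-- The set `R` (`g = true`, the generator `a`) or `R'` (`g = false`, the generator `b`). It
consists of the elements whose first letter other than `g`, `g⁻¹` is positive and of the negative
powers of `g`. -/
def signSet (g : Bool) : Set F₂ :=
  cyl (of (!g)) ∪ (⋃ k ∈ {k : ℕ | 1 ≤ k}, cyl (of g ^ k * of (!g))) ∪
    (cyl (of g)⁻¹ \ ⋃ k ∈ {k : ℕ | 1 ≤ k}, cyl ((of g)⁻¹ ^ k * (of (!g))⁻¹))

theorem mem_cyl_mk_singleton_iff {c : Bool × Bool} {x : F₂} :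
    x ∈ cyl (mk [c]) ↔ x.toWord.head? = some c := by
  rw [mem_cyl_iff, toWord_mk, IsReduced.singleton.reduce_eq]
  cases x.toWord <;> simp [eq_comm]

theorem mem_iUnion_cyl_pow_mul_iff {c d : Bool × Bool} (hcd : c.1 ≠ d.1) {x : F₂} :
    x ∈ ⋃ k ∈ {k : ℕ | 1 ≤ k}, cyl (mk [c] ^ k * mk [d]) ↔ StartsAlternating 1 c d x.toWord := by
  have hword : ∀ k, 1 ≤ k → (mk [c] ^ k * mk [d]).toWord = altWord c d [k] := fun k hk => by
    obtain ⟨z, hz, hred⟩ := exists_altWord_eq_cons hcd (ks := [k]) (by simpa using hk)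
    rw [mk_singleton_pow, mul_mk, toWord_mk]
    exact (hz ▸ hred : IsReduced (altWord c d [k])).reduce_eq
  simp only [Set.mem_iUnion, Set.mem_ofPred_eq, exists_prop, mem_cyl_iff, startsAlternating_iff,
    List.length_eq_one_iff]
  constructor
  · rintro ⟨k, hk, hx⟩
    exact ⟨[k], ⟨⟨k, rfl⟩, by simpa using hk⟩, hword k hk ▸ hx⟩
  · rintro ⟨_, ⟨⟨k, rfl⟩, hk⟩, hx⟩
    replace hk : 1 ≤ k := by simpa using hk
    exact ⟨k, hk, hword k hk ▸ hx⟩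

theorem mem_signSet_iff {g : Bool} {x : F₂} : x ∈ signSet g ↔
    (x.toWord.head? = some (!g, true) ∨ StartsAlternating 1 (g, true) (!g, true) x.toWord) ∨
      x.toWord.head? = some (g, false) ∧
        ¬ StartsAlternating 1 (g, false) (!g, false) x.toWord := by
  rw [← mem_cyl_mk_singleton_iff, ← mem_cyl_mk_singleton_iff,
    ← mem_iUnion_cyl_pow_mul_iff (by simp), ← mem_iUnion_cyl_pow_mul_iff (by simp)]
  rfl

theorem startsAlternating_one_replicate_append_cons_iff {α : Type*} {c c' d d' : α} (h : d' ≠ c)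
    (h' : c' ≠ d) (k : ℕ) (x : List α) :
    StartsAlternating 1 c d (List.replicate k c' ++ d' :: x) ↔ 1 ≤ k ∧ c' = c ∧ d' = d := by
  induction k with
  | zero => simp [StartsAlternating, h]
  | succ k ih =>
    rw [List.replicate_succ, List.cons_append, StartsAlternating, ih]
    cases k <;> simp [StartsAlternating, List.replicate_succ, h']

theorem not_startsAlternating_one_replicate {α : Type*} {c c' d : α} (h : c' ≠ d) (k : ℕ) :
    ¬ StartsAlternating 1 c d (List.replicate k c') := by
  induction k with
  | zero => simp [StartsAlternating]
  | succ k ih =>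
    rw [List.replicate_succ, StartsAlternating]
    cases k <;> simp_all [StartsAlternating, List.replicate_succ]

theorem mem_signSet_iff_of_toWord_eq_append {g b e : Bool} {k : ℕ} {l : List (Bool × Bool)} {x : F₂}
    (hx : x.toWord = List.replicate k (g, b) ++ (!g, e) :: l) : x ∈ signSet g ↔ e = true := by
  rw [mem_signSet_iff, hx, startsAlternating_one_replicate_append_cons_iff (by simp) (by simp),
    startsAlternating_one_replicate_append_cons_iff (by simp) (by simp)]
  cases k <;> cases b <;> cases e <;> simp [List.replicate_succ]

theorem mem_signSet_iff_of_toWord_eq_replicate {g b : Bool} {k : ℕ} {x : F₂}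
    (hx : x.toWord = List.replicate (k + 1) (g, b)) : x ∈ signSet g ↔ b = false := by
  have hnot : ∀ b', ¬ StartsAlternating 1 (g, b') (!g, b') x.toWord := fun b' =>
    hx ▸ not_startsAlternating_one_replicate (by simp) (k + 1)
  simp only [mem_signSet_iff, hnot, not_false_eq_true, and_true, or_false]
  simp [hx, List.replicate_succ]

theorem exists_isReduced_cons {ι : Type*} (g : ι) {l : List (ι × Bool)}
    (hl : IsReduced l) : ∃ b, IsReduced ((g, b) :: l) := by
  rcases l with _ | ⟨s, l⟩
  · exact ⟨true, .singleton⟩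
  · exact ⟨s.2, isReduced_cons_cons.2 ⟨fun _ => rfl, hl⟩⟩

theorem exists_eq_replicate_or_append {g b : Bool} {l : List (Bool × Bool)}
    (hl : IsReduced ((g, b) :: l)) :
    ∃ k, l = List.replicate k (g, b) ∨ ∃ e z, l = List.replicate k (g, b) ++ (!g, e) :: z := by
  induction l with
  | nil => exact ⟨0, .inl rfl⟩
  | cons s l ih =>
    obtain ⟨h, hred⟩ := isReduced_cons_cons.1 hl
    rcases Bool.eq_or_eq_not s.1 g with hs | hs
    · obtain rfl : (g, b) = s := Prod.ext hs.symm (h hs.symm)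
      obtain ⟨k, rfl | ⟨e, z, rfl⟩⟩ := ih hred
      · exact ⟨k + 1, .inl rfl⟩
      · exact ⟨k + 1, .inr ⟨e, z, rfl⟩⟩
    · exact ⟨0, .inr ⟨s.2, l, by rw [← hs]; rfl⟩⟩

theorem mk_cons_mem_signSet_iff {g b : Bool} {l : List (Bool × Bool)} (hne : l ≠ [])
    (hl : IsReduced ((g, b) :: l)) : mk ((g, b) :: l) ∈ signSet g ↔ mk l ∈ signSet g := by
  have hword : (mk ((g, b) :: l)).toWord = (g, b) :: l := hl.reduce_eq
  have hword' : (mk l).toWord = l := (hl.infix (List.suffix_cons _ l).isInfix).reduce_eq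
  obtain ⟨k, rfl | ⟨e, z, rfl⟩⟩ := exists_eq_replicate_or_append hl
  · obtain ⟨k, rfl⟩ : ∃ j, k = j + 1 := Nat.exists_eq_succ_of_ne_zero (by rintro rfl; simp at hne)
    rw [mem_signSet_iff_of_toWord_eq_replicate hword', mem_signSet_iff_of_toWord_eq_replicate hword]
  · rw [mem_signSet_iff_of_toWord_eq_append hword',
      mem_signSet_iff_of_toWord_eq_append (k := k + 1) hword]

theorem inv_of_mul_mem_signSet_iff {g : Bool} {x : F₂} (hx : x ≠ 1) :
    (of g)⁻¹ * x ∈ signSet g ↔ x ∈ signSet g := by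
  obtain ⟨l, hl, rfl⟩ : ∃ l, IsReduced l ∧ mk l = x := ⟨x.toWord, isReduced_toWord, mk_toWord⟩
  have hne : l ≠ [] := fun h => hx (congrArg mk h)
  obtain ⟨s, l, rfl⟩ := List.exists_cons_of_ne_nil hne
  by_cases hs : s = (g, true)
  · subst hs
    have hcancel : (of g)⁻¹ * mk ((g, true) :: l) = mk l := inv_mul_cancel_left (of g) (mk l)
    rw [hcancel]
    rcases eq_or_ne l [] with rfl | hl'
    · rw [mem_signSet_iff_of_toWord_eq_replicate (x := mk [(g, true)]) (k := 0) hl.reduce_eq]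
      simp [mem_signSet_iff, not_startsAlternating_nil]
    · exact (mk_cons_mem_signSet_iff hl' hl).symm
  · refine mk_cons_mem_signSet_iff hne (isReduced_cons_cons.2 ⟨fun hg => ?_, hl⟩)
    rcases s with ⟨i, _ | _⟩ <;> simp_all

end SignSet

section FiniteSupport

theorem finSupp_iff_eventually {f : F₂ → ℤ} : FinSupp f ↔ ∀ᶠ x in cofinite, f x = 0 :=
  Iff.rfl

theorem finSupp_iff_exists_wl {f : F₂ → ℤ} : FinSupp f ↔ ∃ N, ∀ x, N ≤ wl x → f x = 0 := by
  constructor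
  · intro h
    obtain ⟨N, hN⟩ := (h.image wl).bddAbove
    refine ⟨N + 1, fun x hx => of_not_not fun hfx => ?_⟩
    exact (Nat.lt_of_succ_le hx).not_ge (hN (Set.mem_image_of_mem wl hfx))
  · rintro ⟨N, hN⟩
    refine ((List.finite_length_lt (Bool × Bool) N).preimage toWord_injective.injOn).subset ?_
    exact fun x hx => lt_of_not_ge fun hNx => hx (hN x hNx)

theorem finSupp_sub_tr_of {g : Bool} {p : F₂ → ℤ} {n m : ℤ}
    (h : FinSupp (p - (n • (1 : F₂ → ℤ) + m • ind (signSet g)))) :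
    FinSupp (p - tr (of g) p) := by
  classical
  rw [finSupp_iff_eventually] at h ⊢
  filter_upwards [h, (mul_right_injective (of g)⁻¹).tendsto_cofinite.eventually h,
    eventually_cofinite_ne 1] with x hx hx' hne
  have hind : ind (signSet g) ((of g)⁻¹ * x) = ind (signSet g) x := by
    simp only [ind, Set.indicator_apply, inv_of_mul_mem_signSet_iff hne, Pi.one_apply]
  simp only [Pi.sub_apply, Pi.add_apply, Pi.smul_apply, Pi.one_apply, hind] at hx hx'
  simp only [Pi.sub_apply, tr]
  linarith

theorem exists_apply_toWord_eq_cornerValue {A : Type*} [AddCommGroup A] {K N : ℕ}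
    {f : Bool → List (Bool × Bool) → A} (hf : ∀ g, IsTame K (f g)) (hN : IsFlow N (edgeFlow f))
    (g : Bool) {x : F₂} (hx : K + N + 1 ≤ wl x) : ∃ e, (x ∈ signSet g ↔ e = true) ∧
      f g x.toWord = cornerValue (K + 1 + N) (edgeFlow f) (g, true) (!g, e) := by
  have happly := fun e => apply_replicate_append_cons_of_isFlow_edgeFlow (.edgeFlow hf) hN (g := g)
    (d := (!g, e)) (by simp)
  have hred : IsReduced x.toWord := isReduced_toWord
  obtain ⟨b, hb⟩ := exists_isReduced_cons g hred
  obtain ⟨k, hk | ⟨e, z, hz⟩⟩ := exists_eq_replicate_or_append hb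
  · have hlen : K + N + 1 ≤ k := by simpa [wl, hk] using hx
    obtain ⟨j, rfl⟩ : ∃ j, k = j + 1 := ⟨k - 1, by omega⟩
    have htruncate := (hf g).truncate (List.replicate j (g, b)) (g, b) (!g, !b) []
      (by simp; omega) (by simp) (by simp)
    refine ⟨!b, by simp [mem_signSet_iff_of_toWord_eq_replicate hk], ?_⟩
    rw [hk, List.replicate_succ', ← htruncate, List.append_cons, ← List.replicate_succ']
    exact happly (!b) b (j + 1) .singleton (by simp; omega)
  · refine ⟨e, mem_signSet_iff_of_toWord_eq_append hz, ?_⟩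
    rw [hz] at hred ⊢
    refine happly e b k (hred.infix (List.suffix_append _ _).isInfix) ?_
    rw [← hz]
    exact le_trans (by omega) hx

theorem exists_finSupp_sub {K : ℕ} {f : Bool → List (Bool × Bool) → ℤ} (hf : ∀ g, IsTame K (f g))
    (hdiv : FinSupp (∑ g, ((fun x => f g x.toWord) - tr (of g) fun x => f g x.toWord)))
    (g : Bool) :
    ∃ n m : ℤ, FinSupp ((fun x => f g x.toWord) - (n • (1 : F₂ → ℤ) + m • ind (signSet g))) := by
  obtain ⟨N, hN⟩ := finSupp_iff_exists_wl.1 hdiv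
  have hflow : IsFlow N (edgeFlow f) := isFlow_edgeFlow fun l hl hlen => by
    simpa [tr, hl.reduce_eq] using hN (mk l) (by simpa [wl, hl.reduce_eq] using hlen)
  let α : Bool → ℤ := fun e => cornerValue (K + 1 + N) (edgeFlow f) (g, true) (!g, e)
  refine ⟨α false, α true - α false, finSupp_iff_exists_wl.2 ⟨K + N + 1, fun x hx => ?_⟩⟩
  obtain ⟨e, hmem, happly⟩ := exists_apply_toWord_eq_cornerValue hf hflow g hx
  cases e with
  | false =>
    have hind : ind (signSet g) x = 0 := Set.indicator_of_notMem (by simp [hmem]) _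
    simp [happly, hind, α]
  | true =>
    have hind : ind (signSet g) x = 1 := Set.indicator_of_mem (hmem.2 rfl) _
    simp [happly, hind, α]

end FiniteSupport

/-- If `p` and `q` are finite ℤ-linear combinations of indicator functions of sets in
`𝒩 ∪ 𝓜`, then `(p + q) - (a·p + b·q)` is finitely supported iff, up to finitely supported
functions, `p = n·1 + m·1_R` and `q = k·1 + l·1_{R'}` for integers `n, m, k, l`. -/
theorem stmt_2 (p q : F₂ → ℤ)
    (hp : ∃ (n : ℕ) (c : Fin n → ℤ) (S : Fin n → Set F₂),
      (∀ i, S i ∈ Nfam ∪ Mfam) ∧ p = ∑ i, c i • ind (S i))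
    (hq : ∃ (m : ℕ) (d : Fin m → ℤ) (T : Fin m → Set F₂),
      (∀ j, T j ∈ Nfam ∪ Mfam) ∧ q = ∑ j, d j • ind (T j)) :
    FinSupp ((p + q) - (tr ga p + tr gb q)) ↔
      ∃ n m k l : ℤ,
        FinSupp (p - (n • (1 : F₂ → ℤ) + m • ind Rset)) ∧
        FinSupp (q - (k • (1 : F₂ → ℤ) + l • ind Rset')) := by
  have hR : Rset = signSet true := rfl
  have hR' : Rset' = signSet false := rfl
  rw [hR, hR', add_sub_add_comm]
  constructor
  · obtain ⟨_, c, S, hS, rfl⟩ := hp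
    obtain ⟨_, d, T, hT, rfl⟩ := hq
    obtain ⟨K₁, f₁, hf₁, hp⟩ := exists_isTame_of_linearCombination hS c
    obtain ⟨K₂, f₂, hf₂, hq⟩ := exists_isTame_of_linearCombination hT d
    rw [hp, hq]
    intro hdiv
    let f : Bool → List (Bool × Bool) → ℤ := fun g => bif g then f₁ else f₂
    have hf : ∀ g, IsTame (max K₁ K₂) (f g)
      | true => hf₁.mono (le_max_left K₁ K₂)
      | false => hf₂.mono (le_max_right K₁ K₂)
    have key := exists_finSupp_sub hf (by rw [Fintype.sum_bool]; exact hdiv)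
    obtain ⟨n, m, hp'⟩ := key true
    obtain ⟨k, l, hq'⟩ := key false
    exact ⟨n, m, k, l, hp', hq'⟩
  · rintro ⟨n, m, k, l, hp', hq'⟩
    exact (Set.Finite.union (finSupp_sub_tr_of hp') (finSupp_sub_tr_of hq')).subset
      (Function.support_add _ _)
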